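/- arXiv:2503.14373 — 10 statements merged into one kernel-verified Lean document; each statement's English description precedes it below -/
import Mathlib

section
/- Let n be a positive integer. Then 4·δ(n) < n if and only if both of the following hold: (a) n is not of the form p, 2p, 3p or 4p for any prime p; and (b) n is not one of the 27 numbers 1, 16, 18, 24, 25, 27, 30, 32, 35, 36, 40, 42, 45, 48, 49, 50, 54, 55, 56, 60, 63, 64, 65, 66, 75, 85, 95. Moreover, 4·δ(n) = n if and only if n = 64. -/
/-- `staircaseDelta n` is the minimum of `r + s` over all pairs of positive
integers `(r, s)` with `r ≤ s` and `r * s = n`. -/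
noncomputable def staircaseDelta (n : ℕ) : ℕ :=
  sInf {w : ℕ | ∃ r s : ℕ, 0 < r ∧ r ≤ s ∧ r * s = n ∧ w = r + s}

theorem delta_le (r s n : ℕ) (hr : 0 < r) (hs : 0 < s) (h : r * s = n) :
    staircaseDelta n ≤ r + s := by
  rcases le_total r s with hl | hl
  · exact Nat.sInf_le ⟨r, s, hr, hl, h, rfl⟩
  · exact Nat.sInf_le ⟨s, r, hs, hl, by rw [mul_comm]; exact h, by omega⟩

theorem delta_attained (n : ℕ) (hn : 0 < n) :
    ∃ r s : ℕ, 0 < r ∧ r ≤ s ∧ r * s = n ∧ staircaseDelta n = r + s :=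
  Nat.sInf_mem (s := {w : ℕ | ∃ r s : ℕ, 0 < r ∧ r ≤ s ∧ r * s = n ∧ w = r + s})
    ⟨1 + n, 1, n, one_pos, hn, one_mul n, rfl⟩

theorem five_le (r s n : ℕ) (hr : 0 < r) (hl : r ≤ s) (h : r * s = n)
    (h4 : 4 * (r + s) ≤ n) : 5 ≤ r := by
  by_contra hc
  have : r ≤ 4 := by omega
  interval_cases r <;> omega

/-- A bounded primality test, valid for numbers below 441. -/
def smallPrime (k : ℕ) : Prop := 2 ≤ k ∧ ∀ m ∈ Finset.range 21, 2 ≤ m → m < k → ¬ m ∣ k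

instance (k : ℕ) : Decidable (smallPrime k) := by unfold smallPrime; infer_instance

theorem smallPrime_prime (k : ℕ) (hk : k < 441) (h : smallPrime k) : k.Prime := by
  rw [Nat.prime_def_le_sqrt]
  refine ⟨h.1, fun m hm hms => ?_⟩
  have h1 : m * m ≤ k := Nat.le_sqrt.mp hms
  refine h.2 m (Finset.mem_range.mpr ?_) hm ?_ <;> nlinarith

def badList : List ℕ := [1, 16, 18, 24, 25, 27, 30, 32, 35, 36, 40, 42, 45, 48, 49, 50, 54, 55, 56,
            60, 63, 64, 65, 66, 75, 85, 95]

set_option maxRecDepth 100000 in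
theorem small_case : ∀ n ∈ Finset.range 441, 0 < n →
    n ∈ badList ∨ smallPrime n ∨ (2 ∣ n ∧ smallPrime (n / 2)) ∨ (3 ∣ n ∧ smallPrime (n / 3)) ∨
      (4 ∣ n ∧ smallPrime (n / 4)) ∨
      ∃ r ∈ Finset.range 22, 0 < r ∧ r * (n / r) = n ∧ 4 * (r + n / r) < n := by
  decide +kernel

set_option maxRecDepth 100000 in
theorem bad_case : ∀ n ∈ badList, ∀ r ∈ Finset.range 96, 
    r * (n / r) = n → ¬ 4 * (r + n / r) < n := by
  decide +kernel

theorem large_case (n : ℕ) (hn : 441 ≤ n)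
    (hp : ∀ p : ℕ, Nat.Prime p → n ≠ p ∧ n ≠ 2 * p ∧ n ≠ 3 * p ∧ n ≠ 4 * p) :
    ∃ a b, 5 ≤ a ∧ 5 ≤ b ∧ a * b = n := by
  by_cases hbig : ∃ p, p.Prime ∧ p ∣ n ∧ 5 ≤ p
  · obtain ⟨p, pp, ⟨m, rfl⟩, h5⟩ := hbig
    refine ⟨p, m, h5, ?_, rfl⟩
    by_contra hc
    have := hp p pp
    have : m ≤ 4 := by omega
    interval_cases m <;> omega
  · push Not at hbig
    obtain ⟨p, pp, m, rfl⟩ := Nat.exists_prime_and_dvd (n := n) (by omega)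
    have hp5 := hbig p pp (Dvd.intro _ rfl)
    obtain ⟨q, qp, l, rfl⟩ := Nat.exists_prime_and_dvd (n := m) (by rintro rfl; omega)
    have hq5 := hbig q qp ⟨p * l, by ring⟩
    have hp2 := pp.two_le
    have hq2 := qp.two_le
    obtain ⟨t, tp, k, rfl⟩ := Nat.exists_prime_and_dvd (n := l) (by rintro rfl; nlinarith)
    have ht5 := hbig t tp ⟨p * q * k, by ring⟩
    have ht2 := tp.two_le
    refine ⟨p * q * t, k, ?_, ?_, by ring⟩
    · have : 4 ≤ p * q := by nlinarith
      nlinarith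
    · clear hbig hp pp qp tp
      interval_cases p <;> interval_cases q <;> interval_cases t <;> omega

theorem stmt6 (n : ℕ) (hn : 0 < n) :
    (4 * staircaseDelta n < n ↔
      (∀ p : ℕ, Nat.Prime p → n ≠ p ∧ n ≠ 2 * p ∧ n ≠ 3 * p ∧ n ≠ 4 * p) ∧
      n ∉ ({1, 16, 18, 24, 25, 27, 30, 32, 35, 36, 40, 42, 45, 48, 49, 50, 54, 55, 56,
            60, 63, 64, 65, 66, 75, 85, 95} : Set ℕ)) ∧
    (4 * staircaseDelta n = n ↔ n = 64) := by
  have hlist : n ∈ ({1, 16, 18, 24, 25, 27, 30, 32, 35, 36, 40, 42, 45, 48, 49, 50, 54, 55, 56,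
            60, 63, 64, 65, 66, 75, 85, 95} : Set ℕ) ↔ n ∈ badList := by
    simp [badList]
  rw [hlist]
  obtain ⟨r, s, hr, hrs, hmul, hd⟩ := delta_attained n hn
  refine ⟨⟨fun h => ?_, fun ⟨hp, hb⟩ => ?_⟩, fun h => ?_, fun h => ?_⟩
  · rw [hd] at h
    have h5 := five_le r s n hr hrs hmul h.le
    constructor
    · intro p pp
      have key : ∀ k, 0 < k → k ≤ 4 → n ≠ k * p := by
        intro k hk0 hk he
        have hdv : p ∣ r * s := ⟨k, by rw [hmul, he, mul_comm]⟩
        have hp0 := pp.pos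
        rcases (Nat.Prime.dvd_mul pp).mp hdv with ⟨a, rfl⟩ | ⟨a, rfl⟩
        · have : a * s = k := by
            apply Nat.eq_of_mul_eq_mul_left hp0
            linarith
          have : 0 < a := Nat.pos_of_ne_zero (by rintro rfl; omega)
          nlinarith
        · have : r * a = k := by
            apply Nat.eq_of_mul_eq_mul_left hp0
            linarith
          have : 0 < a := Nat.pos_of_ne_zero (by rintro rfl; omega)
          nlinarith
      refine ⟨?_, key 2 (by omega) (by omega), key 3 (by omega) (by omega),
        key 4 (by omega) (by omega)⟩
      simpa using key 1 (by omega) (by omega)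
    · intro hb
      have hle : n ≤ 95 := by
        have : ∀ m ∈ badList, m ≤ 95 := by decide
        exact this n hb
      have hs : n / r = s := by rw [← hmul]; exact Nat.mul_div_cancel_left s hr
      refine bad_case n hb r (Finset.mem_range.mpr (by nlinarith)) ?_ ?_
      · rw [hs, hmul]
      · rw [hs]; exact h
  · by_cases hlt : n < 441
    · rcases small_case n (Finset.mem_range.mpr hlt) hn with
        h | h | ⟨⟨k, rfl⟩, h⟩ | ⟨⟨k, rfl⟩, h⟩ | ⟨⟨k, rfl⟩, h⟩ | ⟨a, -, ha, hab, h⟩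
      · exact absurd h hb
      · exact absurd rfl (hp n (smallPrime_prime n hlt h)).1
      · rw [Nat.mul_div_cancel_left k (by norm_num)] at h
        exact absurd rfl (hp k (smallPrime_prime k (by omega) h)).2.1
      · rw [Nat.mul_div_cancel_left k (by norm_num)] at h
        exact absurd rfl (hp k (smallPrime_prime k (by omega) h)).2.2.1
      · rw [Nat.mul_div_cancel_left k (by norm_num)] at h
        exact absurd rfl (hp k (smallPrime_prime k (by omega) h)).2.2.2
      · have hb0 : 0 < n / a := Nat.pos_of_ne_zero (by intro h0; rw [h0] at hab; omega)
        have := delta_le a (n / a) n ha hb0 hab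
        omega
    · obtain ⟨a, b, ha, hb5, hab⟩ := large_case n (by omega) hp
      have hle := delta_le a b n (by omega) (by omega) hab
      have : 4 * (a + b) < n := by
        rcases le_total a b with hl | hl
        · have : 21 ≤ b := by by_contra hc; nlinarith
          nlinarith
        · have : 21 ≤ a := by by_contra hc; nlinarith
          nlinarith
      omega
  · rw [hd] at h
    have h5 := five_le r s n hr hrs hmul h.le
    have h8 : r ≤ 8 := by by_contra hc; nlinarith
    have h100 := delta_le 10 10 100 (by norm_num) (by norm_num) (by norm_num)
    have h72 := delta_le 8 9 72 (by norm_num) (by norm_num) (by norm_num)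
    interval_cases r
    · have : s = 20 := by omega
      subst this
      have : n = 100 := by omega
      subst this
      omega
    · have : s = 12 := by omega
      subst this
      have : n = 72 := by omega
      subst this
      omega
    · omega
    · omega
  · subst h
    have := delta_le 8 8 64 (by norm_num) (by norm_num) (by norm_num)
    have : 16 ≤ r + s := by
      by_contra hc
      have : r + s ≤ 15 := by omega
      zify at this hmul
      nlinarith [sq_nonneg ((r : ℤ) - s)]
    omega
end

section
/- Let n be a positive integer. Then 2·δ(n) ≤ n + 4 if and only if n is not an odd prime number. Moreover, 2·δ(n) = n + 4 if and only if n ∈ {2, 4, 6, 8, 10, 14} or n = 2p for some prime p ≥ 11. -/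
theorem delta_le_s8 (n a b : ℕ) (hn : 0 < n) (h : a * b = n) : staircaseDelta n ≤ a + b := by
  have ha : 0 < a := by
    rcases Nat.eq_zero_or_pos a with h0 | h0
    · subst h0; omega
    · exact h0
  have hb : 0 < b := by
    rcases Nat.eq_zero_or_pos b with h0 | h0
    · subst h0; omega
    · exact h0
  rcases le_total a b with hab | hab
  · exact Nat.sInf_le ⟨a, b, ha, hab, h, rfl⟩
  · exact Nat.sInf_le ⟨b, a, hb, hab, by rw [mul_comm]; exact h, add_comm a b⟩

theorem exists_factor (n : ℕ) (h2 : 2 ≤ n) (hp : ¬ n.Prime) :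
    ∃ a b : ℕ, 2 ≤ a ∧ a ≤ b ∧ a * b = n := by
  obtain ⟨a, ⟨b, hb⟩, h1, h3⟩ := Nat.exists_dvd_of_not_prime2 h2 hp
  have hb2 : 2 ≤ b := by
    by_contra hlt
    have : b = 0 ∨ b = 1 := by omega
    rcases this with rfl | rfl <;> omega
  rcases le_total a b with hab | hab
  · exact ⟨a, b, h1, hab, hb.symm⟩
  · exact ⟨b, a, hb2, hab, by rw [mul_comm]; exact hb.symm⟩

theorem delta_two_mul_prime (p : ℕ) (hp : p.Prime) : staircaseDelta (2 * p) = p + 2 := by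
  have h2 := hp.two_le
  obtain ⟨r, s, hr, hrs, he, hd⟩ := delta_attained (2 * p) (by omega)
  have hle := delta_le_s8 (2 * p) 2 p (by omega) rfl
  have hpd : p ∣ r * s := he ▸ Dvd.intro_left 2 rfl
  have key : ∀ c d : ℕ, c * d = 2 * p → p ∣ c → p + 2 ≤ c + d := by
    rintro c d h ⟨k, rfl⟩
    have hk : k * d = 2 := by
      have : p * (k * d) = p * 2 := by rw [← mul_assoc, h, mul_comm]
      exact Nat.eq_of_mul_eq_mul_left hp.pos this
    have hk2 : k ∣ 2 := ⟨d, hk.symm⟩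
    rcases (Nat.dvd_prime Nat.prime_two).1 hk2 with rfl | rfl <;> omega
  rcases (Nat.Prime.dvd_mul hp).1 hpd with h | h
  · have := key r s he h; omega
  · have := key s r (by rw [mul_comm]; exact he) h; omega

theorem stmt8 (n : ℕ) (hn : 0 < n) :
    (2 * staircaseDelta n ≤ n + 4 ↔ ¬(Nat.Prime n ∧ Odd n)) ∧
    (2 * staircaseDelta n = n + 4 ↔
      n ∈ ({2, 4, 6, 8, 10, 14} : Set ℕ) ∨ ∃ p : ℕ, Nat.Prime p ∧ 11 ≤ p ∧ n = 2 * p) := by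
  obtain ⟨r, s, hr, hrs, he, hd⟩ := delta_attained n hn
  constructor
  · constructor
    · rintro h ⟨hp, ho⟩
      have h2 : n ≠ 2 := by rintro rfl; exact absurd ho (by decide)
      have h2' := hp.two_le
      rcases (Nat.dvd_prime hp).1 ⟨s, he.symm⟩ with h1 | h1
      · subst h1; omega
      · omega
    · intro h
      by_cases hp : n.Prime
      · have h2 := hp.eq_two_or_odd'.resolve_right (fun ho => h ⟨hp, ho⟩)
        have := delta_le_s8 n 1 n hn (one_mul n)
        omega
      · by_cases h1 : n = 1
        · have := delta_le_s8 n 1 n hn (one_mul n)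
          omega
        · obtain ⟨a, b, ha, hab, hm⟩ := exists_factor n (by omega) hp
          have := delta_le_s8 n a b hn hm
          nlinarith
  · constructor
    · intro h
      by_cases h1 : r = 1
      · subst h1
        have : n = 2 := by omega
        left; simp [this]
      have hs : r = 2 := by
        by_contra h2
        have h4 : 3 ≤ r := by omega
        nlinarith [Nat.mul_le_mul h4 (h4.trans hrs)]
      subst hs
      by_cases hp : s.Prime
      · by_cases h11 : 11 ≤ s
        · exact Or.inr ⟨s, hp, h11, he.symm⟩
        · left
          subst he
          have : s < 11 := by omega
          interval_cases s <;> first | (exfalso; revert hp; norm_num; done) | simp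
      · obtain ⟨a, b, ha, hab, hm⟩ := exists_factor s hrs hp
        have := delta_le_s8 n (2 * a) b hn (by rw [mul_assoc, hm, he])
        have hb : b = 2 := by
          by_contra h2
          have h4 : 3 ≤ b := by omega
          nlinarith
        have ha' : a = 2 := by omega
        subst hb ha'
        left
        have : n = 8 := by omega
        simp [this]
    · rintro (h | ⟨p, hp, -, rfl⟩)
      · have hP : ∀ p : ℕ, p.Prime → n = 2 * p → 2 * staircaseDelta n = n + 4 := by
          rintro p hp rfl
          rw [delta_two_mul_prime p hp]; ring
        simp only [Set.mem_insert_iff, Set.mem_singleton_iff] at h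
        rcases h with h | h | h | h | h | h
        · have := delta_le_s8 n 1 2 hn h.symm
          have : 3 ≤ r + s := by
            by_contra hlt
            have : r = 1 := by omega
            subst this; omega
          omega
        · exact hP 2 (by norm_num) h
        · exact hP 3 (by norm_num) h
        · have := delta_le_s8 n 2 4 hn h.symm
          have : 6 ≤ r + s := by
            nlinarith [sq_nonneg ((s : ℤ) - r)]
          omega
        · exact hP 5 (by norm_num) h
        · exact hP 7 (by norm_num) h
      · rw [delta_two_mul_prime p hp]; ring
end

section
/- Let n be a positive integer. Then δ(m) < δ(n) holds for every composite positive integer m < n (i.e., every m < n that is neither 1 nor prime) if and only if either n = p or n = 2p for some prime p, or n ∈ {1, 8, 21}. -/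
section Aux

open Finset Nat

lemma aux_dvd_choose {p a b : ℕ} (hp : p.Prime) (h : p ≤ a % p + b % p) :
    p ∣ (a + b).choose b := by
  rw [hp.dvd_iff_one_le_factorization (Nat.choose_pos (Nat.le_add_left _ _)).ne',
    Nat.factorization_choose' hp (Nat.lt_add_one _)]
  refine Finset.card_pos.mpr ⟨1, ?_⟩
  have ha : a % p ≤ a := Nat.mod_le _ _
  have hb : b % p ≤ b := Nat.mod_le _ _
  have : 1 ≤ Nat.log p (a + b) := Nat.log_pos hp.one_lt (by omega)
  simp only [mem_filter, mem_Ico, pow_one]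
  omega

lemma aux_mod {p a c : ℕ} (h1 : c * p ≤ a) (h2 : a < (c + 1) * p) : a % p = a - c * p := by
  have : a = (a - c * p) + p * c := by rw [Nat.mul_comm p c]; omega
  rw [this, Nat.add_mul_mod_self_left, Nat.mod_eq_of_lt]
  · rw [Nat.mul_comm p c]; omega
  · rw [Nat.add_mul] at h2; omega

lemma aux_dvd_multinomial {p k : ℕ} (hp : p.Prime) (h1 : k < p) (h2 : p ≤ 6 * k) :
    p ∣ (6 * k).choose (3 * k) * (3 * k).choose k := by
  have e1 : 6 * k = 3 * k + 3 * k := by ring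
  have e2 : 3 * k = 2 * k + k := by ring
  by_cases c1 : 3 * k < p
  · apply dvd_mul_of_dvd_left
    rw [e1]; apply aux_dvd_choose hp
    rw [Nat.mod_eq_of_lt c1]; omega
  by_cases c2 : 2 * k < p
  · apply dvd_mul_of_dvd_right
    rw [e2]; apply aux_dvd_choose hp
    rw [Nat.mod_eq_of_lt c2, Nat.mod_eq_of_lt h1]; omega
  by_cases c3 : 3 * k < 2 * p
  · apply dvd_mul_of_dvd_left
    rw [e1]; apply aux_dvd_choose hp
    rw [aux_mod (c := 1) (by omega) (by omega)]; omega
  · apply dvd_mul_of_dvd_right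
    rw [e2]; apply aux_dvd_choose hp
    rw [aux_mod (c := 1) (by omega) (by omega), Nat.mod_eq_of_lt h1]; omega

lemma aux_choose_three_upper (k : ℕ) : (3 * k).choose k * 4 ^ k ≤ 27 ^ k := by
  have h := add_pow (1 : ℕ) 2 (3 * k)
  simp only [Nat.cast_id] at h
  have h2 : (1 : ℕ) ^ k * 2 ^ (3 * k - k) * (3 * k).choose k ≤
      ∑ m ∈ range (3 * k + 1), (1 : ℕ) ^ m * 2 ^ (3 * k - m) * (3 * k).choose m :=
    Finset.single_le_sum (f := fun m => (1 : ℕ) ^ m * 2 ^ (3 * k - m) * (3 * k).choose m)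
      (fun _ _ => Nat.zero_le _) (by simp; omega)
  rw [← h, show 3 * k - k = 2 * k by omega, pow_mul, pow_mul] at h2
  norm_num at h2
  linarith

lemma aux_choose_three_lower (n : ℕ) : 27 ^ n ≤ (3 * n + 1) * ((3 * n).choose n * 4 ^ n) := by
  induction n with
  | zero => simp
  | succ n ih =>
    have h1 := Nat.choose_mul_factorial_mul_factorial (show n ≤ 3 * n by omega)
    have h2 := Nat.choose_mul_factorial_mul_factorial (show n + 1 ≤ 3 * (n + 1) by omega)
    rw [show 3 * n - n = 2 * n by omega] at h1
    rw [show 3 * (n + 1) - (n + 1) = 2 * n + 1 + 1 by omega,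
      show (3 * (n + 1)) ! = (3 * n + 1 + 1 + 1) ! from rfl] at h2
    simp only [Nat.factorial_succ] at h2
    rw [← h1] at h2
    set C := (3 * n).choose n
    set D := (3 * (n + 1)).choose (n + 1)
    have h3 : D * (2 * (n + 1) * (2 * n + 1)) = C * (3 * (3 * n + 2) * (3 * n + 1)) := by
      have hpos : 0 < n ! * (2 * n)! * (n + 1) := by positivity
      apply Nat.eq_of_mul_eq_mul_right hpos
      have := h2
      linear_combination this
    have hpos : 0 < 2 * (n + 1) * (2 * n + 1) := by positivity
    apply Nat.le_of_mul_le_mul_left _ hpos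
    calc 2 * (n + 1) * (2 * n + 1) * 27 ^ (n + 1)
        = 27 * (2 * (n + 1) * (2 * n + 1)) * 27 ^ n := by ring
      _ ≤ 27 * (2 * (n + 1) * (2 * n + 1)) * ((3 * n + 1) * (C * 4 ^ n)) := by gcongr
      _ = (27 * (2 * (n + 1) * (2 * n + 1))) * ((3 * n + 1) * (C * 4 ^ n)) := by ring
      _ ≤ (12 * (3 * n + 4) * (3 * n + 2)) * ((3 * n + 1) * (C * 4 ^ n)) := by
          gcongr ?_ * _
          nlinarith
      _ = (3 * n + 4) * 4 ^ n * 4 * (C * (3 * (3 * n + 2) * (3 * n + 1))) := by ring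
      _ = (3 * n + 4) * 4 ^ n * 4 * (D * (2 * (n + 1) * (2 * n + 1))) := by rw [h3]
      _ = 2 * (n + 1) * (2 * n + 1) * ((3 * (n + 1) + 1) * (D * 4 ^ (n + 1))) := by ring

lemma aux_primorial_six (k : ℕ) : primorial (6 * k) ≤ primorial k * 432 ^ k := by
  have h : primorial (6 * k) ∣ primorial k * ((6 * k).choose (3 * k) * (3 * k).choose k) := by
    rw [show 6 * k = k + 5 * k by ring, primorial_add]
    apply mul_dvd_mul_left
    apply prod_primes_dvd _ (fun _ hk ↦ (mem_filter.1 hk).2.prime)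
    intro p hp
    rw [mem_filter, mem_Ico] at hp
    rw [show k + 5 * k = 6 * k by ring]
    exact aux_dvd_multinomial hp.2 (by omega) (by omega)
  have hpos : 0 < (6 * k).choose (3 * k) * (3 * k).choose k :=
    Nat.mul_pos (Nat.choose_pos (by omega)) (Nat.choose_pos (by omega))
  refine (Nat.le_of_dvd (Nat.mul_pos (primorial_pos _) hpos) h).trans ?_
  gcongr
  have h1 : (6 * k).choose (3 * k) ≤ 64 ^ k := by
    calc _ ≤ 2 ^ (6 * k) := Nat.choose_le_two_pow _ _
      _ = _ := by rw [pow_mul]; norm_num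
  have h2 := aux_choose_three_upper k
  apply Nat.le_of_mul_le_mul_right _ (show 0 < 4 ^ k by positivity)
  calc _ = (6 * k).choose (3 * k) * ((3 * k).choose k * 4 ^ k) := by ring
    _ ≤ 64 ^ k * 27 ^ k := by gcongr
    _ = 432 ^ k * 4 ^ k := by rw [← mul_pow, ← mul_pow]; norm_num

lemma aux_primorial_prime {n : ℕ} (h : (n + 1).Prime) :
    primorial (n + 1) = (n + 1) * primorial n := by
  unfold primorial
  rw [range_add_one (n := n + 1), filter_insert, if_pos h, prod_insert (by simp)]

lemma aux_primorial_not_prime {n : ℕ} (h : ¬ (n + 1).Prime) :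
    primorial (n + 1) = primorial n := by
  unfold primorial
  rw [range_add_one (n := n + 1), filter_insert, if_neg h]

lemma aux_pow1 {k : ℕ} (hk : 18 ≤ k) :
    (6 * k + 1) * (6 * k + 5) * 32 * 13824 ^ k ≤ 16807 * 16807 ^ k := by
  induction k, hk using Nat.le_induction with
  | base => norm_num
  | succ k hk ih =>
    have : (6 * (k + 1) + 1) * (6 * (k + 1) + 5) * 13824 ≤ 16807 * ((6 * k + 1) * (6 * k + 5)) := by
      nlinarith
    calc _ = ((6 * (k + 1) + 1) * (6 * (k + 1) + 5) * 13824) * (32 * 13824 ^ k) := by ring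
      _ ≤ (16807 * ((6 * k + 1) * (6 * k + 5))) * (32 * 13824 ^ k) := by gcongr
      _ = 16807 * ((6 * k + 1) * (6 * k + 5) * 32 * 13824 ^ k) := by ring
      _ ≤ 16807 * (16807 * 16807 ^ k) := by gcongr
      _ = _ := by ring

lemma aux_pow2 {k : ℕ} (hk : 18 ≤ k) :
    (6 * k + 1) * 2 * 13824 ^ k ≤ 7 * 16807 ^ k := by
  induction k, hk using Nat.le_induction with
  | base => norm_num
  | succ k hk ih =>
    have : (6 * (k + 1) + 1) * 13824 ≤ 16807 * (6 * k + 1) := by omega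
    calc _ = ((6 * (k + 1) + 1) * 13824) * (2 * 13824 ^ k) := by ring
      _ ≤ (16807 * (6 * k + 1)) * (2 * 13824 ^ k) := by gcongr
      _ = 16807 * ((6 * k + 1) * 2 * 13824 ^ k) := by ring
      _ ≤ 16807 * (7 * 16807 ^ k) := by gcongr
      _ = _ := by ring

lemma aux_primorial_small (n : ℕ) (hn : n < 114) (hp : n.Prime) :
    primorial n * 2 ^ n ≤ 7 ^ n := by
  interval_cases n <;> first
    | (exfalso; revert hp; norm_num; done)
    | (unfold primorial; rw [prod_filter]; norm_num [prod_range_succ])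

lemma aux_primorial_le (n : ℕ) : primorial n * 2 ^ n ≤ 7 ^ n := by
  induction n using Nat.strong_induction_on with | h n ih =>
  by_cases hn0 : n = 0
  · subst hn0; simp
  obtain ⟨n, rfl⟩ : ∃ n', n = n' + 1 := ⟨n - 1, by omega⟩
  by_cases hp : (n + 1).Prime
  swap
  · rw [aux_primorial_not_prime hp, pow_succ, pow_succ, ← mul_assoc]
    have := ih n (by omega)
    omega
  by_cases hn : n + 1 < 114
  · exact aux_primorial_small _ hn hp
  have hd2 : ¬ 2 ∣ n + 1 := fun h => by
    have := (Nat.prime_dvd_prime_iff_eq Nat.prime_two hp).1 h; omega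
  have hd3 : ¬ 3 ∣ n + 1 := fun h => by
    have := (Nat.prime_dvd_prime_iff_eq Nat.prime_three hp).1 h; omega
  obtain ⟨k, hk⟩ : ∃ k, n = 6 * k ∨ n = 6 * k + 4 := ⟨n / 6, by omega⟩
  have h6 := aux_primorial_six k
  have ihk := ih k (by omega)
  have np : ∀ j, 2 ≤ j → j ≤ 4 → ¬ (6 * k + j).Prime := by
    intro j hj1 hj2 h
    have h2 : ¬ 2 ∣ 6 * k + j := fun h' => by
      have := (Nat.prime_dvd_prime_iff_eq Nat.prime_two h).1 h'; omega
    have h3 : ¬ 3 ∣ 6 * k + j := fun h' => by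
      have := (Nat.prime_dvd_prime_iff_eq Nat.prime_three h).1 h'; omega
    omega
  have key : primorial (6 * k) * 2 ^ (6 * k) ≤ 7 ^ k * 13824 ^ k := by
    calc primorial (6 * k) * 2 ^ (6 * k) ≤ primorial k * 432 ^ k * 2 ^ (6 * k) := by gcongr
      _ = primorial k * 2 ^ k * 13824 ^ k := by
        rw [show 6 * k = k + 5 * k by ring, pow_add, pow_mul 2 5 k, show 13824 = 432 * 2 ^ 5 by norm_num,
          mul_pow]
        ring
      _ ≤ _ := by gcongr
  have e7 : 7 ^ (6 * k) = 7 ^ k * 16807 ^ k := by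
    rw [show 6 * k = k + 5 * k by ring, pow_add, pow_mul 7 5 k]; norm_num
  rcases hk with rfl | rfl
  · rw [aux_primorial_prime hp, pow_succ, pow_succ, e7]
    calc _ = (6 * k + 1) * 2 * (primorial (6 * k) * 2 ^ (6 * k)) := by ring
      _ ≤ (6 * k + 1) * 2 * (7 ^ k * 13824 ^ k) := by gcongr
      _ = 7 ^ k * ((6 * k + 1) * 2 * 13824 ^ k) := by ring
      _ ≤ 7 ^ k * (7 * 16807 ^ k) := Nat.mul_le_mul_left _ (aux_pow2 (by omega))
      _ = _ := by ring
  · have h1 : primorial (6 * k + 1) ≤ (6 * k + 1) * primorial (6 * k) := by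
      by_cases h : (6 * k + 1).Prime
      · rw [aux_primorial_prime h]
      · rw [aux_primorial_not_prime h]; exact Nat.le_mul_of_pos_left _ (by omega)
    have h4 : primorial (6 * k + 4) = primorial (6 * k + 1) := by
      rw [aux_primorial_not_prime (np 4 (by norm_num) (by norm_num)),
        aux_primorial_not_prime (np 3 (by norm_num) (by norm_num)),
        aux_primorial_not_prime (np 2 (by norm_num) (by norm_num))]
    rw [aux_primorial_prime hp, h4]
    have : 7 ^ (6 * k + 4 + 1) = 16807 * (7 ^ k * 16807 ^ k) := by
      rw [← e7, pow_succ, pow_add]; ring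
    rw [this]
    calc _ ≤ (6 * k + 4 + 1) * ((6 * k + 1) * primorial (6 * k)) * 2 ^ (6 * k + 4 + 1) := by gcongr
      _ = (6 * k + 1) * (6 * k + 5) * 32 * (primorial (6 * k) * 2 ^ (6 * k)) := by ring
      _ ≤ (6 * k + 1) * (6 * k + 5) * 32 * (7 ^ k * 13824 ^ k) := by gcongr
      _ = 7 ^ k * ((6 * k + 1) * (6 * k + 5) * 32 * 13824 ^ k) := by ring
      _ ≤ 7 ^ k * (16807 * 16807 ^ k) := Nat.mul_le_mul_left _ (aux_pow1 (by omega))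
      _ = _ := by ring

lemma aux_not_dvd_choose {p a b : ℕ} (hp : p.Prime) (hsq : a + b < p ^ 2)
    (h : a % p + b % p < p) : ((a + b).choose b).factorization p = 0 := by
  rw [Nat.factorization_choose' (b := 2) hp
    (Nat.log_lt_of_lt_pow' (by norm_num) hsq)]
  rw [Finset.card_eq_zero, Finset.filter_eq_empty_iff]
  intro i hi
  have : i = 1 := by simp at hi; omega
  subst this
  simp only [pow_one]; omega

lemma aux_fac_zero1 {p m : ℕ} (hp : p.Prime) (hsq : 6 * m < p ^ 2) (h1 : 3 * m < 2 * p)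
    (h2 : p ≤ 2 * m) : ((6 * m).choose (2 * m)).factorization p = 0 := by
  rw [show 6 * m = 4 * m + 2 * m by ring] at *
  apply aux_not_dvd_choose hp hsq
  rw [aux_mod (a := 4 * m) (c := 2) (by omega) (by omega),
    aux_mod (a := 2 * m) (c := 1) (by omega) (by omega)]
  omega

lemma aux_fac_zero2 {p m : ℕ} (hp : p.Prime) (hsq : 6 * m < p ^ 2) (h1 : 3 * m < p)
    (h2 : p ≤ 4 * m) : ((6 * m).choose (2 * m)).factorization p = 0 := by
  rw [show 6 * m = 4 * m + 2 * m by ring] at *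
  apply aux_not_dvd_choose hp hsq
  rw [aux_mod (a := 4 * m) (c := 1) (by omega) (by omega), Nat.mod_eq_of_lt (a := 2 * m) (by omega)]
  omega

lemma aux_choose_bound (m : ℕ) (hm : 0 < m)
    (hno : ∀ q : ℕ, q.Prime → 4 * m + 3 < q → 6 * m < q) :
    (6 * m).choose (2 * m) ≤
      (6 * m) ^ (Nat.sqrt (6 * m) + 3) * primorial (3 * m / 2) * (3 * m).choose m := by
  set s := Nat.sqrt (6 * m) with hs
  set S := {p ∈ range (6 * m + 1) | p.Prime} with hS
  set f : ℕ → ℕ := fun p => p ^ ((6 * m).choose (2 * m)).factorization p with hf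
  have hprod : (6 * m).choose (2 * m) = ∏ p ∈ S, f p := by
    rw [← Nat.prod_pow_factorization_choose (6 * m) (2 * m) (by omega)]
    symm
    refine Finset.prod_filter_of_ne fun p _ h => ?_
    contrapose h
    simp only [hf]
    rw [Nat.factorization_eq_zero_of_not_prime _ h, pow_zero]
  let g1 : ℕ → ℕ := fun p => if p ≤ s ∨ (4 * m < p ∧ p ≤ 4 * m + 3) then 6 * m else 1
  let g2 : ℕ → ℕ := fun p => if p ≤ 3 * m / 2 then p else 1
  let g3 : ℕ → ℕ := fun p => if 2 * m < p ∧ p ≤ 3 * m then p else 1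
  have hle : ∀ p ∈ S, f p ≤ g1 p * g2 p * g3 p := by
    intro p hp
    obtain ⟨hp1, hp2⟩ := Finset.mem_filter.1 hp
    have hp1 : p ≤ 6 * m := by simp at hp1; omega
    have hpos := hp2.pos
    have g2pos : 1 ≤ g2 p := by simp only [g2]; split_ifs <;> omega
    have g3pos : 1 ≤ g3 p := by simp only [g3]; split_ifs <;> omega
    by_cases c1 : p ≤ s ∨ (4 * m < p ∧ p ≤ 4 * m + 3)
    · have e1 : g1 p = 6 * m := if_pos c1
      have : f p ≤ 6 * m := Nat.pow_factorization_choose_le (by omega)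
      calc f p ≤ 6 * m * 1 * 1 := by omega
        _ ≤ g1 p * g2 p * g3 p := by rw [e1]; gcongr
    have e1 : g1 p = 1 := if_neg c1
    push Not at c1
    have hsq : 6 * m < p ^ 2 := Nat.sqrt_lt'.mp c1.1
    have hfp : f p ≤ p := by
      refine (Nat.pow_le_pow_right hp2.pos
        (Nat.factorization_choose_le_one hsq)).trans (pow_one p).le
    rw [e1, one_mul]
    have fz : ((6 * m).choose (2 * m)).factorization p = 0 → f p ≤ g2 p * g3 p := by
      intro h
      have : f p = 1 := by simp only [hf]; rw [h, pow_zero]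
      rw [this]
      exact Nat.mul_pos g2pos g3pos
    by_cases c2 : p ≤ 3 * m / 2
    · have e2 : g2 p = p := if_pos c2
      rw [e2]
      exact hfp.trans (Nat.le_mul_of_pos_right _ g3pos)
    by_cases c3 : p ≤ 2 * m
    · exact fz (aux_fac_zero1 hp2 hsq (by omega) c3)
    by_cases c4 : p ≤ 3 * m
    · have e3 : g3 p = p := if_pos ⟨by omega, c4⟩
      rw [e3]
      exact hfp.trans (Nat.le_mul_of_pos_left _ g2pos)
    by_cases c5 : p ≤ 4 * m
    · exact fz (aux_fac_zero2 hp2 hsq (by omega) c5)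
    · have := hno p hp2 (by have := c1.2 (by omega); omega)
      omega
  rw [hprod]
  refine (Finset.prod_le_prod' hle).trans ?_
  rw [Finset.prod_mul_distrib, Finset.prod_mul_distrib]
  refine Nat.mul_le_mul (Nat.mul_le_mul ?_ ?_) ?_
  · simp only [g1]
    rw [← Finset.prod_filter, Finset.prod_const]
    apply Nat.pow_le_pow_right (by omega)
    have hsub : {p ∈ S | p ≤ s ∨ (4 * m < p ∧ p ≤ 4 * m + 3)} ⊆
        Finset.Icc 1 s ∪ Finset.Icc (4 * m + 1) (4 * m + 3) := by
      intro p hp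
      simp only [hS, Finset.mem_filter, Finset.mem_union, Finset.mem_Icc] at hp ⊢
      have := hp.1.2.pos
      omega
    refine (Finset.card_le_card hsub).trans ((Finset.card_union_le _ _).trans ?_)
    simp only [Nat.card_Icc]
    omega
  · simp only [g2]
    rw [← Finset.prod_filter]
    unfold primorial
    refine Finset.prod_le_prod_of_subset_of_one_le' ?_ ?_
    · intro p hp
      simp only [hS, Finset.mem_filter, Finset.mem_range] at hp ⊢
      exact ⟨by omega, hp.1.2⟩
    · intro p hp _
      exact (Finset.mem_filter.1 hp).2.pos
  · simp only [g3]
    rw [← Finset.prod_filter]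
    apply Nat.le_of_dvd (Nat.choose_pos (by omega))
    apply Finset.prod_primes_dvd
    · intro p hp
      exact (Finset.mem_filter.1 (Finset.mem_filter.1 hp).1).2.prime
    · intro p hp
      obtain ⟨hp1, hp3, hp4⟩ := Finset.mem_filter.1 hp
      have hp2 := (Finset.mem_filter.1 hp1).2
      rw [show 3 * m = 2 * m + m by ring]
      apply aux_dvd_choose hp2
      rw [Nat.mod_eq_of_lt hp3, Nat.mod_eq_of_lt (by omega)]; omega

lemma aux_main_ineq (m : ℕ) (hm : 0 < m)
    (hno : ∀ q : ℕ, q.Prime → 4 * m + 3 < q → 6 * m < q) :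
    729 ^ m ≤ (Nat.sqrt (6 * m) + 1) ^ (4 * Nat.sqrt (6 * m) + 16) * 686 ^ m := by
  have h1 := aux_choose_bound m hm hno
  have h2 := aux_choose_three_lower (2 * m)
  have h3 := aux_choose_three_upper m
  have h4 := aux_primorial_le (3 * m / 2)
  rw [show 3 * (2 * m) = 6 * m by ring] at h2
  set s := Nat.sqrt (6 * m) with hs
  set P := primorial (3 * m / 2)
  set A := (6 * m).choose (2 * m)
  set B := (3 * m).choose m
  have h5 : 27 ^ m ≤ (6 * m + 1) * (6 * m) ^ (s + 3) * P * 4 ^ m := by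
    apply Nat.le_of_mul_le_mul_right _ (show 0 < 27 ^ m * 4 ^ m by positivity)
    calc 27 ^ m * (27 ^ m * 4 ^ m) = 27 ^ (2 * m) * 4 ^ m := by ring
      _ ≤ ((6 * m + 1) * (A * 4 ^ (2 * m))) * 4 ^ m := by gcongr
      _ ≤ ((6 * m + 1) * (((6 * m) ^ (s + 3) * P * B) * 4 ^ (2 * m))) * 4 ^ m := by gcongr
      _ = (6 * m + 1) * (6 * m) ^ (s + 3) * P * 4 ^ (2 * m) * (B * 4 ^ m) := by ring
      _ ≤ (6 * m + 1) * (6 * m) ^ (s + 3) * P * 4 ^ (2 * m) * 27 ^ m := by gcongr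
      _ = _ := by ring
  have h6 : P ^ 2 * 8 ^ m ≤ 343 ^ m := by
    obtain ⟨d, hd⟩ : ∃ d, 3 * m = 2 * (3 * m / 2) + d := ⟨3 * m % 2, by omega⟩
    calc P ^ 2 * 8 ^ m = P ^ 2 * 2 ^ (3 * m) := by rw [pow_mul]; norm_num
      _ = (P * 2 ^ (3 * m / 2)) ^ 2 * 2 ^ d := by rw [hd, pow_add, mul_pow, ← pow_mul, ← hd]; ring
      _ ≤ (7 ^ (3 * m / 2)) ^ 2 * 7 ^ d := by gcongr; norm_num
      _ = 7 ^ (3 * m) := by conv_rhs => rw [hd, pow_add]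
                            rw [← pow_mul]; ring
      _ = 343 ^ m := by rw [pow_mul]; norm_num
  have h7 : 6 * m + 1 ≤ (s + 1) ^ 2 := Nat.lt_succ_sqrt' _
  apply Nat.le_of_mul_le_mul_right _ (show 0 < 8 ^ m by positivity)
  calc 729 ^ m * 8 ^ m = (27 ^ m) ^ 2 * 8 ^ m := by rw [← pow_mul, mul_comm m 2, pow_mul]; norm_num
    _ ≤ ((6 * m + 1) * (6 * m) ^ (s + 3) * P * 4 ^ m) ^ 2 * 8 ^ m := by gcongr
    _ ≤ ((6 * m + 1) * (6 * m + 1) ^ (s + 3) * P * 4 ^ m) ^ 2 * 8 ^ m := by gcongr; omega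
    _ = (6 * m + 1) ^ (2 * s + 8) * (P ^ 2 * 8 ^ m) * 16 ^ m := by
        rw [show (16 : ℕ) = 4 ^ 2 by norm_num, ← pow_mul]; ring
    _ ≤ ((s + 1) ^ 2) ^ (2 * s + 8) * 343 ^ m * 16 ^ m := by gcongr
    _ = (s + 1) ^ (4 * s + 16) * (343 * 16) ^ m := by rw [mul_pow, ← pow_mul]; ring
    _ = (s + 1) ^ (4 * s + 16) * (686 * 8) ^ m := by norm_num
    _ = _ := by rw [mul_pow]; ring

lemma aux_large (m : ℕ) (hm : 2800000 ≤ m) : ∃ q : ℕ, q.Prime ∧ 4 * m + 3 < q ∧ q ≤ 6 * m := by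
  by_contra! hno
  have h := aux_main_ineq m (by omega) hno
  have hs1 : Nat.sqrt (6 * m) ^ 2 ≤ 6 * m := Nat.sqrt_le' _
  have hs2 : 4096 ≤ Nat.sqrt (6 * m) := Nat.le_sqrt'.2 (by omega)
  set s := Nat.sqrt (6 * m)
  have hR : (729 : ℝ) ^ m ≤ ((s : ℝ) + 1) ^ (4 * s + 16) * 686 ^ m := by exact_mod_cast h
  have hsR : (4096 : ℝ) ≤ s := by exact_mod_cast hs2
  have hmR : (s : ℝ) ^ 2 ≤ 6 * m := by exact_mod_cast hs1
  have hlog := Real.log_le_log (by positivity) hR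
  rw [Real.log_mul (by positivity) (by positivity), Real.log_pow, Real.log_pow, Real.log_pow] at hlog
  push_cast at hlog
  have hq : 43 / 729 ≤ Real.log 729 - Real.log 686 := by
    rw [← Real.log_div (by norm_num) (by norm_num)]
    have := Real.one_sub_inv_le_log_of_pos (show (0 : ℝ) < 729 / 686 by norm_num)
    norm_num at this ⊢
    linarith
  have ht : Real.log ((s : ℝ) + 1) ≤ 7.32 + ((s : ℝ) + 1) / 4096 := by
    have h1 := Real.log_le_sub_one_of_pos (show 0 < ((s : ℝ) + 1) / 4096 by positivity)
    rw [Real.log_div (by positivity) (by norm_num), show (4096 : ℝ) = 2 ^ 12 by norm_num,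
      Real.log_pow] at h1
    have := Real.log_two_lt_d9
    norm_num at h1 ⊢
    linarith
  have h8 : (m : ℝ) * (43 / 729) ≤ (4 * s + 16) * (7.32 + ((s : ℝ) + 1) / 4096) := by
    calc (m : ℝ) * (43 / 729) ≤ m * (Real.log 729 - Real.log 686) := by gcongr
      _ ≤ (4 * s + 16) * Real.log ((s : ℝ) + 1) := by linarith
      _ ≤ _ := by gcongr
  nlinarith

lemma aux_prime_between (x : ℕ) (hx : 8 ≤ x) : ∃ q : ℕ, q.Prime ∧ x < q ∧ 2 * q < 3 * x := by
  by_cases hbig : 15745943 ≤ x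
  · obtain ⟨q, hq, h1, h2⟩ := aux_large (x / 4) (by omega)
    refine ⟨q, hq, by omega, ?_⟩
    rcases Nat.lt_or_ge q (6 * (x / 4)) with h | h
    · omega
    · exfalso
      have h3 : 2 ∣ q := by omega
      have := (Nat.prime_dvd_prime_iff_eq Nat.prime_two hq).1 h3
      omega
  by_cases h37 : 10497299 ≤ x
  · exact ⟨15745943, by norm_num, by omega, by omega⟩
  by_cases h36 : 6998221 ≤ x
  · exact ⟨10497299, by norm_num, by omega, by omega⟩
  by_cases h35 : 4665499 ≤ x
  · exact ⟨6998221, by norm_num, by omega, by omega⟩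
  by_cases h34 : 3110339 ≤ x
  · exact ⟨4665499, by norm_num, by omega, by omega⟩
  by_cases h33 : 2073563 ≤ x
  · exact ⟨3110339, by norm_num, by omega, by omega⟩
  by_cases h32 : 1382393 ≤ x
  · exact ⟨2073563, by norm_num, by omega, by omega⟩
  by_cases h31 : 921611 ≤ x
  · exact ⟨1382393, by norm_num, by omega, by omega⟩
  by_cases h30 : 614413 ≤ x
  · exact ⟨921611, by norm_num, by omega, by omega⟩
  by_cases h29 : 409609 ≤ x
  · exact ⟨614413, by norm_num, by omega, by omega⟩
  by_cases h28 : 273083 ≤ x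
  · exact ⟨409609, by norm_num, by omega, by omega⟩
  by_cases h27 : 182059 ≤ x
  · exact ⟨273083, by norm_num, by omega, by omega⟩
  by_cases h26 : 121379 ≤ x
  · exact ⟨182059, by norm_num, by omega, by omega⟩
  by_cases h25 : 80923 ≤ x
  · exact ⟨121379, by norm_num, by omega, by omega⟩
  by_cases h24 : 53951 ≤ x
  · exact ⟨80923, by norm_num, by omega, by omega⟩
  by_cases h23 : 35969 ≤ x
  · exact ⟨53951, by norm_num, by omega, by omega⟩
  by_cases h22 : 23981 ≤ x
  · exact ⟨35969, by norm_num, by omega, by omega⟩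
  by_cases h21 : 15991 ≤ x
  · exact ⟨23981, by norm_num, by omega, by omega⟩
  by_cases h20 : 10667 ≤ x
  · exact ⟨15991, by norm_num, by omega, by omega⟩
  by_cases h19 : 7121 ≤ x
  · exact ⟨10667, by norm_num, by omega, by omega⟩
  by_cases h18 : 4751 ≤ x
  · exact ⟨7121, by norm_num, by omega, by omega⟩
  by_cases h17 : 3169 ≤ x
  · exact ⟨4751, by norm_num, by omega, by omega⟩
  by_cases h16 : 2113 ≤ x
  · exact ⟨3169, by norm_num, by omega, by omega⟩
  by_cases h15 : 1409 ≤ x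
  · exact ⟨2113, by norm_num, by omega, by omega⟩
  by_cases h14 : 941 ≤ x
  · exact ⟨1409, by norm_num, by omega, by omega⟩
  by_cases h13 : 631 ≤ x
  · exact ⟨941, by norm_num, by omega, by omega⟩
  by_cases h12 : 421 ≤ x
  · exact ⟨631, by norm_num, by omega, by omega⟩
  by_cases h11 : 283 ≤ x
  · exact ⟨421, by norm_num, by omega, by omega⟩
  by_cases h10 : 193 ≤ x
  · exact ⟨283, by norm_num, by omega, by omega⟩
  by_cases h9 : 131 ≤ x
  · exact ⟨193, by norm_num, by omega, by omega⟩
  by_cases h8 : 89 ≤ x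
  · exact ⟨131, by norm_num, by omega, by omega⟩
  by_cases h7 : 61 ≤ x
  · exact ⟨89, by norm_num, by omega, by omega⟩
  by_cases h6 : 43 ≤ x
  · exact ⟨61, by norm_num, by omega, by omega⟩
  by_cases h5 : 31 ≤ x
  · exact ⟨43, by norm_num, by omega, by omega⟩
  by_cases h4 : 23 ≤ x
  · exact ⟨31, by norm_num, by omega, by omega⟩
  by_cases h3 : 19 ≤ x
  · exact ⟨23, by norm_num, by omega, by omega⟩
  by_cases h2 : 13 ≤ x
  · exact ⟨19, by norm_num, by omega, by omega⟩
  by_cases h1 : 11 ≤ x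
  · exact ⟨13, by norm_num, by omega, by omega⟩
  by_cases h0 : 8 ≤ x
  · exact ⟨11, by norm_num, by omega, by omega⟩
  omega

lemma aux_delta_le {n r s : ℕ} (hr : 0 < r) (hrs : r ≤ s) (h : r * s = n) :
    staircaseDelta n ≤ r + s := Nat.sInf_le ⟨r, s, hr, hrs, h, rfl⟩

lemma aux_delta_spec {n : ℕ} (hn : 0 < n) :
    ∃ r s : ℕ, 0 < r ∧ r ≤ s ∧ r * s = n ∧ staircaseDelta n = r + s :=
  Nat.sInf_mem (s := {w : ℕ | ∃ r s : ℕ, 0 < r ∧ r ≤ s ∧ r * s = n ∧ w = r + s})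
    ⟨1 + n, 1, n, one_pos, hn, one_mul n, rfl⟩

/-- A composite number is a product of two factors that are at least two. -/
lemma aux_composite {m : ℕ} (h0 : 0 < m) (h1 : m ≠ 1) (hp : ¬ m.Prime) :
    ∃ a b : ℕ, 2 ≤ a ∧ a ≤ b ∧ a * b = m := by
  obtain ⟨a, h2, h3, hdvd⟩ : ∃ a, 2 ≤ a ∧ a < m ∧ a ∣ m :=
    ⟨m.minFac, (Nat.minFac_prime h1).two_le, (Nat.not_prime_iff_minFac_lt (by omega)).1 hp,
      m.minFac_dvd⟩
  obtain ⟨b, rfl⟩ := hdvd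
  have hb : 2 ≤ b := by
    by_contra hb
    interval_cases b <;> omega
  rcases Nat.le_total a b with h | h
  · exact ⟨a, b, h2, h, rfl⟩
  · exact ⟨b, a, hb, h, mul_comm _ _⟩

lemma aux_delta_composite {m : ℕ} (h0 : 0 < m) (h1 : m ≠ 1) (hp : ¬ m.Prime) :
    2 * staircaseDelta m ≤ m + 4 := by
  obtain ⟨a, b, ha, hab, rfl⟩ := aux_composite h0 h1 hp
  have := aux_delta_le (by omega) hab rfl
  nlinarith

lemma aux_delta_prime {p : ℕ} (hp : p.Prime) : staircaseDelta p = p + 1 := by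
  obtain ⟨r, s, hr, hrs, h, hd⟩ := aux_delta_spec hp.pos
  rw [hd]
  rcases (Nat.dvd_prime hp).1 ⟨s, h.symm⟩ with rfl | rfl
  · omega
  · have := hp.two_le
    nlinarith

lemma aux_delta_two_mul_prime {p : ℕ} (hp : p.Prime) : staircaseDelta (2 * p) = p + 2 := by
  have h2 := hp.two_le
  have hle := aux_delta_le (r := 2) (by norm_num) h2 rfl
  obtain ⟨r, s, hr, hrs, h, hd⟩ := aux_delta_spec (n := 2 * p) (by omega)
  rw [hd] at hle ⊢
  have hdvd : p ∣ r * s := ⟨2, by rw [h]; ring⟩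
  rcases hp.dvd_mul.1 hdvd with ⟨c, rfl⟩ | ⟨c, rfl⟩
  · have hc : c * s = 2 := by
      apply Nat.eq_of_mul_eq_mul_left hp.pos; rw [← mul_assoc, h]; ring
    have hc1 : 0 < c := by
      rcases Nat.eq_zero_or_pos c with h0 | h0
      · subst h0; simp at hc
      · exact h0
    nlinarith
  · have hc : r * c = 2 := by
      apply Nat.eq_of_mul_eq_mul_left hp.pos
      calc p * (r * c) = r * (p * c) := by ring
        _ = p * 2 := by rw [h]; ring
    have hr2 : r ∣ 2 := ⟨c, hc.symm⟩
    rcases (Nat.dvd_prime Nat.prime_two).1 hr2 with rfl | rfl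
    · have : c = 2 := by omega
      subst this; omega
    · have : c = 1 := by omega
      subst this; omega

lemma aux_delta_eight : staircaseDelta 8 = 6 := by
  obtain ⟨r, s, hr, hrs, h, hd⟩ := aux_delta_spec (n := 8) (by omega)
  have hle := aux_delta_le (n := 8) (r := 2) (s := 4) (by norm_num) (by norm_num) (by norm_num)
  have : r ≤ 2 := by nlinarith
  interval_cases r <;> omega

lemma aux_delta_twentyone : staircaseDelta 21 = 10 := by
  obtain ⟨r, s, hr, hrs, h, hd⟩ := aux_delta_spec (n := 21) (by omega)
  have hle := aux_delta_le (n := 21) (r := 3) (s := 7) (by norm_num) (by norm_num) (by norm_num)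
  have : r ≤ 4 := by nlinarith
  interval_cases r <;> omega

/-- Every composite number other than `8` and twice a prime has both factors at least three. -/
lemma aux_factor_three {n : ℕ} (h0 : 0 < n) (h1 : n ≠ 1) (hp : ¬ n.Prime)
    (h2 : ∀ p : ℕ, p.Prime → n ≠ 2 * p) (h8 : n ≠ 8) :
    ∃ a b : ℕ, 3 ≤ a ∧ a ≤ b ∧ a * b = n := by
  obtain ⟨a, b, ha, hab, rfl⟩ := aux_composite h0 h1 hp
  by_cases ha3 : 3 ≤ a
  · exact ⟨a, b, ha3, hab, rfl⟩
  obtain rfl : a = 2 := by omega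
  have hb : ¬ b.Prime := fun h => h2 b h rfl
  obtain ⟨c, d, hc, hcd, rfl⟩ := aux_composite (by omega) (by omega) hb
  have hd : 3 ≤ d := by
    by_contra hd
    have : c = 2 := by omega
    have : d = 2 := by omega
    subst c; subst d; simp at h8
  rcases Nat.le_total (2 * c) d with h | h
  · exact ⟨2 * c, d, by omega, h, by ring⟩
  · exact ⟨d, 2 * c, hd, h, by ring⟩

lemma aux_small_composite {m : ℕ} (hm : m < 21) (h0 : 0 < m) (h1 : m ≠ 1) (hp : ¬ m.Prime) :
    staircaseDelta m < 10 := by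
  by_cases h : m < 16
  · have := aux_delta_composite h0 h1 hp
    omega
  · have : m = 16 ∨ m = 17 ∨ m = 18 ∨ m = 19 ∨ m = 20 := by omega
    rcases this with rfl | rfl | rfl | rfl | rfl
    · have := aux_delta_le (n := 16) (r := 4) (s := 4) (by norm_num) (by norm_num) (by norm_num)
      omega
    · exact absurd (by norm_num) hp
    · have := aux_delta_le (n := 18) (r := 3) (s := 6) (by norm_num) (by norm_num) (by norm_num)
      omega
    · exact absurd (by norm_num) hp
    · have := aux_delta_le (n := 20) (r := 4) (s := 5) (by norm_num) (by norm_num) (by norm_num)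
      omega

/-- A suitable composite number below a given composite number. -/
lemma aux_witness {n a b : ℕ} (ha : 3 ≤ a) (hab : a ≤ b) (h : a * b = n) (h21 : n ≠ 21) :
    ∃ m : ℕ, 0 < m ∧ m < n ∧ m ≠ 1 ∧ ¬ m.Prime ∧ a + b ≤ staircaseDelta m := by
  have hq : ∀ q : ℕ, q.Prime → 2 * q < n → a + b ≤ q + 2 →
      ∃ m : ℕ, 0 < m ∧ m < n ∧ m ≠ 1 ∧ ¬ m.Prime ∧ a + b ≤ staircaseDelta m := by
    intro q hq h1 h2
    have := hq.two_le
    refine ⟨2 * q, by omega, h1, by omega, Nat.not_prime_mul (by norm_num) (by omega), ?_⟩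
    rw [aux_delta_two_mul_prime hq]
    exact h2
  have hsum : 3 * (a + b) ≤ n + 9 := by nlinarith
  by_cases hn : 24 ≤ n
  · obtain ⟨q, hqp, h1, h2⟩ := aux_prime_between (n / 3) (by omega)
    exact hq q hqp (by omega) (by omega)
  have ha4 : a < 5 := by nlinarith
  have hb8 : b < 8 := by nlinarith
  by_cases h9 : n = 9
  · subst h9
    refine ⟨8, by norm_num, by norm_num, by norm_num, by norm_num, ?_⟩
    rw [aux_delta_eight]; omega
  by_cases h12 : n = 12
  · exact hq 5 (by norm_num) (by omega) (by omega)
  · refine hq 7 (by norm_num) ?_ ?_ <;> interval_cases a <;> omega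

end Aux

/-- For a positive integer `n`, `δ(m) < δ(n)` for every composite `m < n` iff
`n = p` or `n = 2p` for some prime `p`, or `n ∈ {1, 8, 21}`. -/
theorem stmt11 (n : ℕ) (hn : 0 < n) :
    (∀ m : ℕ, 0 < m → m < n → m ≠ 1 → ¬Nat.Prime m →
        staircaseDelta m < staircaseDelta n) ↔
      (∃ p : ℕ, Nat.Prime p ∧ (n = p ∨ n = 2 * p)) ∨ n ∈ ({1, 8, 21} : Set ℕ) := by
  constructor
  · intro H
    by_contra hcon
    push Not at hcon
    obtain ⟨hpq, hmem⟩ := hcon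
    simp only [Set.mem_insert_iff, Set.mem_singleton_iff, not_or] at hmem
    obtain ⟨h1, h8, h21⟩ := hmem
    have hp : ¬ n.Prime := fun h => (hpq n h).1 rfl
    obtain ⟨a, b, ha, hab, hn'⟩ := aux_factor_three hn h1 hp (fun p hp => (hpq p hp).2) h8
    obtain ⟨m, hm0, hmn, hm1, hmp, hle⟩ := aux_witness ha hab hn' h21
    have := H m hm0 hmn hm1 hmp
    have := aux_delta_le (by omega) hab hn'
    omega
  · rintro (⟨p, hp, rfl | rfl⟩ | h) m hm0 hmn hm1 hmp
    · rw [aux_delta_prime hp]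
      have := aux_delta_composite hm0 hm1 hmp
      have : 2 ≤ m := by omega
      omega
    · rw [aux_delta_two_mul_prime hp]
      have := aux_delta_composite hm0 hm1 hmp
      omega
    · simp only [Set.mem_insert_iff, Set.mem_singleton_iff] at h
      rcases h with rfl | rfl | rfl
      · omega
      · rw [aux_delta_eight]
        have := aux_delta_composite hm0 hm1 hmp
        have : m ≠ 7 := by rintro rfl; exact hmp (by norm_num)
        omega
      · rw [aux_delta_twentyone]
        exact aux_small_composite hmn hm0 hm1 hmp
end

section
/- Let k be a positive integer and let n be an integer with k² − k + 1 ≤ n ≤ k². Then δ(n) ≥ 2k, and δ(n) = 2k holds if and only if n = k² − l² for some non-negative integer l with l² ≤ k − 1. -/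
/-- Let `k ≥ 1` and `k^2 - k + 1 ≤ n ≤ k^2`. Then `δ(n) ≥ 2k`, and `δ(n) = 2k`
iff `n = k^2 - l^2` for some `l ≥ 0` with `l^2 ≤ k - 1`. -/
theorem stmt13 (k n : ℕ) (hk : 0 < k) (h1 : k ^ 2 - k + 1 ≤ n) (h2 : n ≤ k ^ 2) :
    2 * k ≤ staircaseDelta n ∧
    (staircaseDelta n = 2 * k ↔ ∃ l : ℕ, l ^ 2 ≤ k - 1 ∧ n = k ^ 2 - l ^ 2) := by
  have hkk : k ≤ k ^ 2 := by nlinarith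
  have h1' : k ^ 2 + 1 ≤ n + k := by omega
  have key : ∀ r s : ℕ, r * s = n → 2 * k ≤ r + s := by
    intro r s h
    by_contra hlt
    have h3 : r + s + 1 ≤ 2 * k := by omega
    zify at h h1' h3
    nlinarith [sq_nonneg ((r : ℤ) - s), mul_self_nonneg ((r : ℤ) + s)]
  have hne : {w : ℕ | ∃ r s : ℕ, 0 < r ∧ r ≤ s ∧ r * s = n ∧ w = r + s}.Nonempty :=
    ⟨1 + n, 1, n, one_pos, by omega, one_mul n, rfl⟩
  have hmem : ∃ r s : ℕ, 0 < r ∧ r ≤ s ∧ r * s = n ∧ staircaseDelta n = r + s :=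
    Nat.sInf_mem hne
  have hlow : 2 * k ≤ staircaseDelta n := by
    obtain ⟨r, s, _, _, h, e⟩ := hmem
    rw [e]
    exact key r s h
  refine ⟨hlow, ?_, ?_⟩
  · intro he
    obtain ⟨r, s, _, hrs, h, e⟩ := hmem
    obtain ⟨l, rfl⟩ : ∃ l, k = r + l := ⟨k - r, by omega⟩
    obtain rfl : s = r + l + l := by omega
    have e2 : n + l ^ 2 = (r + l) ^ 2 := by rw [← h]; ring
    exact ⟨l, by omega, by omega⟩
  · rintro ⟨l, hl, hn⟩
    have hlk : l < k := by
      have : l ≤ l ^ 2 := Nat.le_self_pow two_ne_zero l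
      omega
    refine le_antisymm (Nat.sInf_le ⟨k - l, k + l, by omega, by omega, ?_, by omega⟩) hlow
    rw [hn, Nat.sq_sub_sq, mul_comm]
end

section
/- Let k be a positive integer and let n be an integer with k² + 1 ≤ n ≤ k² + k. Then δ(n) ≥ 2k + 1, and δ(n) = 2k + 1 holds if and only if n = (k² + k) − (l² + l) for some non-negative integer l with l² + l ≤ k − 1. -/
/-- Let `k ≥ 1` and `k^2 + 1 ≤ n ≤ k^2 + k`. Then `δ(n) ≥ 2k + 1`, and
`δ(n) = 2k + 1` iff `n = (k^2 + k) - (l^2 + l)` for some `l ≥ 0` with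
`l^2 + l ≤ k - 1`. -/
theorem stmt14 (k n : ℕ) (hk : 0 < k) (h1 : k ^ 2 + 1 ≤ n) (h2 : n ≤ k ^ 2 + k) :
    2 * k + 1 ≤ staircaseDelta n ∧
    (staircaseDelta n = 2 * k + 1 ↔
      ∃ l : ℕ, l ^ 2 + l ≤ k - 1 ∧ n = (k ^ 2 + k) - (l ^ 2 + l)) := by
  have hmem : staircaseDelta n ∈ {w : ℕ | ∃ r s : ℕ, 0 < r ∧ r ≤ s ∧ r * s = n ∧ w = r + s} := by
    apply Nat.sInf_mem
    exact ⟨1 + n, 1, n, by norm_num, by nlinarith, by simp, rfl⟩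
  have hge : 2 * k + 1 ≤ staircaseDelta n := by
    obtain ⟨r, s, hr, hrs, hn, hw⟩ := hmem
    rw [hw]
    by_contra hlt
    obtain ⟨d, rfl⟩ := Nat.exists_eq_add_of_le hrs
    have h3 : r + (r + d) ≤ 2 * k := by omega
    have h4 := Nat.mul_le_mul h3 h3
    nlinarith [Nat.zero_le (d * d)]
  refine ⟨hge, ?_, ?_⟩
  · intro he
    obtain ⟨r, s, hr, hrs, hn, hw⟩ := hmem
    rw [he] at hw
    obtain ⟨l, rfl⟩ : ∃ l, k = r + l := Nat.exists_eq_add_of_le (by omega)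
    obtain rfl : s = r + l + 1 + l := by omega
    have key : n + (l ^ 2 + l) = (r + l) ^ 2 + (r + l) := by
      rw [← hn]; ring
    exact ⟨l, by omega, by omega⟩
  · rintro ⟨l, hl, hn⟩
    apply le_antisymm _ hge
    have hlk : l < k := by
      have := Nat.zero_le (l ^ 2)
      omega
    obtain ⟨r, rfl⟩ := Nat.exists_eq_add_of_le hlk.le
    apply Nat.sInf_le
    refine ⟨r, r + l + 1 + l, by omega, by omega, ?_, by ring⟩
    have key : r * (r + l + 1 + l) + (l ^ 2 + l) = (l + r) ^ 2 + (l + r) := by ring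
    omega
end

section
/- Let k and n be positive integers with k² − k + 1 ≤ n ≤ k², and let t, r₁, …, r_t, s₁, …, s_t be positive integers such that n = r₁s₁ + r₂s₂ + ⋯ + r_t s_t and r₁ > r₂ > ⋯ > r_t (the latter condition being vacuous when t = 1). Then r₁ + s₁ + s₂ + ⋯ + s_t ≥ 2k. -/
/-- Let `k, n` be positive integers with `k^2 - k + 1 ≤ n ≤ k^2`, and let
`n = r₁s₁ + ⋯ + r_t s_t` with `t ≥ 1`, all `rᵢ, sᵢ` positive and
`r₁ > r₂ > ⋯ > r_t`. Then `r₁ + s₁ + ⋯ + s_t ≥ 2k`. -/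
theorem stmt15 (k n : ℕ) (hk : 0 < k) (h1 : k ^ 2 - k + 1 ≤ n) (h2 : n ≤ k ^ 2)
    (t : ℕ) (ht : 0 < t) (r s : Fin t → ℕ)
    (hr : ∀ i, 0 < r i) (hs : ∀ i, 0 < s i) (hanti : StrictAnti r)
    (hsum : n = ∑ i, r i * s i) :
    2 * k ≤ r ⟨0, ht⟩ + ∑ i, s i := by
  have hle : n ≤ r ⟨0, ht⟩ * ∑ i, s i := by
    rw [hsum, Finset.mul_sum]
    refine Finset.sum_le_sum fun i _ => Nat.mul_le_mul_right _ (hanti.antitone ?_)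
    exact Fin.mk_le_of_le_val (Nat.zero_le _)
  generalize r ⟨0, ht⟩ = a at *
  generalize ∑ i, s i = b at *
  by_contra hcon
  have h3 : a + b + 1 ≤ 2 * k := by omega
  have h4 : k ^ 2 + 1 ≤ n + k := by omega
  zify at h3 h4 hle
  nlinarith [sq_nonneg ((a : ℤ) - b),
    mul_nonneg (sub_nonneg.2 h3) (by positivity : (0 : ℤ) ≤ a + b + 2 * k)]
end

section
/- Let k and n be positive integers with k² + 1 ≤ n ≤ k² + k, and let t, r₁, …, r_t, s₁, …, s_t be positive integers such that n = r₁s₁ + r₂s₂ + ⋯ + r_t s_t and r₁ > r₂ > ⋯ > r_t (the latter condition being vacuous when t = 1). Then r₁ + s₁ + s₂ + ⋯ + s_t ≥ 2k + 1. -/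
/-- Let `k, n` be positive integers with `k^2 + 1 ≤ n ≤ k^2 + k`, and let
`n = r₁s₁ + ⋯ + r_t s_t` with `t ≥ 1`, all `rᵢ, sᵢ` positive and
`r₁ > r₂ > ⋯ > r_t`. Then `r₁ + s₁ + ⋯ + s_t ≥ 2k + 1`. -/
theorem stmt16 (k n : ℕ) (hk : 0 < k) (h1 : k ^ 2 + 1 ≤ n) (h2 : n ≤ k ^ 2 + k)
    (t : ℕ) (ht : 0 < t) (r s : Fin t → ℕ)
    (hr : ∀ i, 0 < r i) (hs : ∀ i, 0 < s i) (hanti : StrictAnti r)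
    (hsum : n = ∑ i, r i * s i) :
    2 * k + 1 ≤ r ⟨0, ht⟩ + ∑ i, s i := by
  have hle : n ≤ r ⟨0, ht⟩ * ∑ i, s i := by
    rw [hsum, Finset.mul_sum]
    refine Finset.sum_le_sum fun i _ => Nat.mul_le_mul_right _ (hanti.antitone ?_)
    exact Fin.mk_le_of_le_val (Nat.zero_le _)
  by_contra hlt
  generalize (∑ i, s i) = S at *
  generalize r ⟨0, ht⟩ = R at *
  have h3 : R + S ≤ 2 * k := by omega
  zify at *
  nlinarith [sq_nonneg ((R : ℤ) - S)]
end

section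
/- Let k be a positive integer and suppose k² = r₁s₁ + r₂s₂ + ⋯ + r_t s_t where t ≥ 2 and r₁, …, r_t, s₁, …, s_t are positive integers with r₁ > r₂ > ⋯ > r_t. Then r₁ + s₁ + s₂ + ⋯ + s_t ≥ 2k + 1. Moreover, if t = 1 and r₁ + s₁ = 2k with r₁s₁ = k², then r₁ = s₁ = k. -/
/-- Let `k` be a positive integer. If `k^2 = r₁s₁ + ⋯ + r_t s_t` with `t ≥ 2`,
all `rᵢ, sᵢ` positive and `r₁ > r₂ > ⋯ > r_t`, then
`r₁ + s₁ + ⋯ + s_t ≥ 2k + 1`. Moreover, if `t = 1` and `r₁ s₁ = k^2` with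
`r₁ + s₁ = 2k` (`r₁, s₁` positive), then `r₁ = s₁ = k`. -/
theorem stmt17 (k : ℕ) (hk : 0 < k) :
    (∀ (t : ℕ) (ht : 2 ≤ t) (r s : Fin t → ℕ),
      (∀ i, 0 < r i) → (∀ i, 0 < s i) → StrictAnti r →
      k ^ 2 = ∑ i, r i * s i →
      2 * k + 1 ≤ r ⟨0, Nat.lt_of_lt_of_le Nat.zero_lt_two ht⟩ + ∑ i, s i) ∧
    (∀ r₁ s₁ : ℕ, 0 < r₁ → 0 < s₁ → r₁ * s₁ = k ^ 2 → r₁ + s₁ = 2 * k →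
      r₁ = k ∧ s₁ = k) := by
  constructor
  · intro t ht r s hr hs hanti hsum
    have h0 : 0 < t := Nat.lt_of_lt_of_le Nat.zero_lt_two ht
    have hlt : ∑ i, r i * s i < ∑ i, r ⟨0, h0⟩ * s i := by
      apply Finset.sum_lt_sum
      · intro i _
        exact Nat.mul_le_mul_right _ (hanti.antitone (Fin.mk_le_of_le_val (Nat.zero_le _)))
      · refine ⟨⟨1, ht⟩, Finset.mem_univ _, ?_⟩
        refine Nat.mul_lt_mul_of_pos_right (hanti ?_) (hs _)
        exact Fin.mk_lt_mk.mpr Nat.zero_lt_one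
    rw [← Finset.mul_sum, ← hsum] at hlt
    generalize ∑ i, s i = S at *
    change 2 * k + 1 ≤ r ⟨0, h0⟩ + S
    generalize r ⟨0, h0⟩ = a at *
    by_contra hcon
    have h : a + S ≤ 2 * k := by omega
    zify at h hlt
    nlinarith [sq_nonneg ((a : ℤ) - S)]
  · intro a b _ _ h1 h2
    have h3 : ((a : ℤ) - k) ^ 2 = 0 := by
      zify at h1 h2
      have hb : (b : ℤ) = 2 * k - a := by linarith
      rw [hb] at h1
      linarith
    have h4 : (a : ℤ) - k = 0 := by simpa using h3
    omega
end

section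
/- Let k be a positive integer and suppose k² + k = r₁s₁ + r₂s₂ + ⋯ + r_t s_t where t ≥ 2 and r₁, …, r_t, s₁, …, s_t are positive integers with r₁ > r₂ > ⋯ > r_t. Then r₁ + s₁ + s₂ + ⋯ + s_t ≥ 2k + 2. -/
/-- Let `k` be a positive integer. If `k^2 + k = r₁s₁ + ⋯ + r_t s_t` with `t ≥ 2`,
all `rᵢ, sᵢ` positive and `r₁ > r₂ > ⋯ > r_t`, then
`r₁ + s₁ + ⋯ + s_t ≥ 2k + 2`. -/
theorem stmt18 (k : ℕ) (hk : 0 < k)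
    (t : ℕ) (ht : 2 ≤ t) (r s : Fin t → ℕ)
    (hr : ∀ i, 0 < r i) (hs : ∀ i, 0 < s i) (hanti : StrictAnti r)
    (hsum : k ^ 2 + k = ∑ i, r i * s i) :
    2 * k + 2 ≤ r ⟨0, Nat.lt_of_lt_of_le Nat.zero_lt_two ht⟩ + ∑ i, s i := by
  set r0 := r ⟨0, Nat.lt_of_lt_of_le Nat.zero_lt_two ht⟩ with hr0
  have hlt : ∑ i, r i * s i < ∑ i, r0 * s i := by
    apply Finset.sum_lt_sum
    · intro i _
      exact Nat.mul_le_mul_right _ (hanti.antitone (Fin.mk_le_of_le_val (Nat.zero_le _)))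
    · refine ⟨⟨1, ht⟩, Finset.mem_univ _, ?_⟩
      refine Nat.mul_lt_mul_of_pos_right (hanti ?_) (hs _)
      exact Fin.mk_lt_mk.mpr Nat.zero_lt_one
  rw [← Finset.mul_sum, ← hsum] at hlt
  generalize ∑ i, s i = S at hlt ⊢
  clear_value r0
  by_contra! hcon
  have h1 : r0 + S ≤ 2 * k + 1 := by omega
  zify at hlt h1
  have h2 : (r0 : ℤ) * S ≤ r0 * (2 * k + 1 - r0) :=
    mul_le_mul_of_nonneg_left (by linarith) (by positivity)
  rcases Nat.lt_or_ge k r0 with h | h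
  · have h3 : (k : ℤ) + 1 ≤ r0 := by exact_mod_cast h
    nlinarith [mul_nonneg (sub_nonneg.2 h3) (by linarith : (0 : ℤ) ≤ r0 - k)]
  · have h3 : (r0 : ℤ) ≤ k := by exact_mod_cast h
    nlinarith [mul_nonneg (sub_nonneg.2 h3) (by linarith : (0 : ℤ) ≤ k + 1 - r0)]
end

section
/- Let n be a positive integer and let φ(n) denote the minimum weight over all staircase representations of n. Then there is a unique positive integer k with k² − k + 1 ≤ n ≤ k² + k, and for this k: if n ≤ k² then φ(n) = 2k (i.e., every staircase representation of n has weight at least 2k and some staircase representation of n has weight exactly 2k), while if n ≥ k² + 1 then φ(n) = 2k + 1 (i.e., every staircase representation of n has weight at least 2k + 1 and some staircase representation of n has weight exactly 2k + 1). -/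
/-- `IsStaircaseWeight n w` says that `w` is the weight `r₁ + s₁ + ⋯ + s_t` of some
staircase representation `n = r₁s₁ + ⋯ + r_t s_t` with `t ≥ 1`, all `rᵢ, sᵢ`
positive integers and `r₁ > r₂ > ⋯ > r_t`. -/
def IsStaircaseWeight (n w : ℕ) : Prop :=
  ∃ (t : ℕ) (ht : 0 < t) (r s : Fin t → ℕ),
    (∀ i, 0 < r i) ∧ (∀ i, 0 < s i) ∧ StrictAnti r ∧
    n = ∑ i, r i * s i ∧ w = r ⟨0, ht⟩ + ∑ i, s i

theorem staircase_lower {n w : ℕ} (h : IsStaircaseWeight n w) : 4 * n ≤ w ^ 2 := by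
  obtain ⟨t, ht, r, s, hr, hs, hanti, hn, hw⟩ := h
  have h1 : n ≤ r ⟨0, ht⟩ * ∑ i, s i := by
    rw [hn, Finset.mul_sum]
    refine Finset.sum_le_sum fun i _ => Nat.mul_le_mul_right _ (hanti.antitone ?_)
    exact Fin.mk_le_of_le_val (Nat.zero_le _)
  generalize r ⟨0, ht⟩ = a at *
  generalize ∑ i, s i = b at *
  subst hw
  zify at *
  nlinarith [sq_nonneg ((a : ℤ) - b)]

theorem staircase_exists (a b m : ℕ) (hm : 0 < m) (hma : m ≤ a) (hb : 0 < b ∨ m = a) :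
    IsStaircaseWeight (a * b + m) (a + (b + 1)) := by
  rcases Nat.eq_or_lt_of_le hma with h | h
  · refine ⟨1, one_pos, fun _ => a, fun _ => b + 1, fun _ => hm.trans_le hma, fun _ => Nat.succ_pos b,
      Subsingleton.strictAnti _, ?_, ?_⟩
    · subst h
      simp
      ring
    · simp
  · have hb' : 0 < b := by omega
    refine ⟨2, two_pos, ![a, m], ![b, 1], ?_, ?_, ?_, ?_, ?_⟩
    · intro i
      fin_cases i <;> simp <;> omega
    · intro i
      fin_cases i <;> simp <;> omega
    · intro i j hij
      fin_cases i <;> fin_cases j <;> simp at hij ⊢ <;> omega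
    · simp [Fin.sum_univ_two]
    · simp [Fin.sum_univ_two]

/-- For every positive integer `n` there is a unique positive integer `k` with
`k^2 - k + 1 ≤ n ≤ k^2 + k`; for this `k`, if `n ≤ k^2` then the minimum weight
`φ(n)` of a staircase representation of `n` equals `2k` (every representation has
weight at least `2k` and some representation has weight exactly `2k`), while if
`n ≥ k^2 + 1` then `φ(n) = 2k + 1` (every representation has weight at least
`2k + 1` and some representation has weight exactly `2k + 1`). -/
theorem stmt19 (n : ℕ) (hn : 0 < n) :
    (∃! k : ℕ, 0 < k ∧ k ^ 2 - k + 1 ≤ n ∧ n ≤ k ^ 2 + k) ∧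
    (∀ k : ℕ, 0 < k → k ^ 2 - k + 1 ≤ n → n ≤ k ^ 2 + k →
      (n ≤ k ^ 2 →
        (∀ w : ℕ, IsStaircaseWeight n w → 2 * k ≤ w) ∧ IsStaircaseWeight n (2 * k)) ∧
      (k ^ 2 + 1 ≤ n →
        (∀ w : ℕ, IsStaircaseWeight n w → 2 * k + 1 ≤ w) ∧
          IsStaircaseWeight n (2 * k + 1))) := by
  have key : ∀ k : ℕ, k ^ 2 - k + 1 ≤ n ↔ k ^ 2 + 1 ≤ n + k := by
    intro k
    have : k ≤ k ^ 2 := Nat.le_self_pow two_ne_zero k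
    omega
  simp only [key]
  refine ⟨?_, ?_⟩
  · have hex : ∃ k : ℕ, n ≤ k ^ 2 + k := ⟨n, by omega⟩
    classical
    refine ⟨Nat.find hex, ⟨?_, ?_, Nat.find_spec hex⟩, ?_⟩
    · rw [Nat.find_pos]
      omega
    · rcases hk : Nat.find hex with _ | k
      · simp
        omega
      · have := Nat.find_min hex (m := k) (by omega)
        nlinarith
    · rintro k ⟨hk, h1, h2⟩
      refine ((Nat.find_eq_iff hex).2 ⟨h2, ?_⟩).symm
      intro m hm h
      nlinarith
  · intro k hk h1 h2
    refine ⟨fun h => ⟨fun w hw => ?_, ?_⟩, fun h => ⟨fun w hw => ?_, ?_⟩⟩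
    · have := staircase_lower hw
      by_contra! hlt
      obtain ⟨k, rfl⟩ : ∃ j, k = j + 1 := ⟨k - 1, by omega⟩
      have h3 : w ≤ 2 * k + 1 := by omega
      have h4 := Nat.pow_le_pow_left h3 2
      nlinarith
    · obtain ⟨k, rfl⟩ : ∃ j, k = j + 1 := ⟨k - 1, by omega⟩
      obtain ⟨m, rfl⟩ : ∃ m, n = (k + 1) * k + m := ⟨n - (k + 1) * k, by
        have : (k + 1) * k ≤ n := by nlinarith
        omega⟩
      have hm : 0 < m := by nlinarith
      have hm2 : m ≤ k + 1 := by nlinarith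
      have := staircase_exists (k + 1) k m hm hm2 (by omega)
      rwa [two_mul]
    · have := staircase_lower hw
      by_contra! hlt
      have h3 : w ≤ 2 * k := by omega
      have h4 := Nat.pow_le_pow_left h3 2
      nlinarith
    · obtain ⟨m, rfl⟩ : ∃ m, n = k * k + m := ⟨n - k * k, by
        have : k * k ≤ n := by nlinarith
        omega⟩
      have hm : 0 < m := by nlinarith
      have hm2 : m ≤ k := by nlinarith
      have := staircase_exists k k m hm hm2 (by omega)
      rwa [two_mul, add_assoc]
end
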